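/- arXiv:1303.6642 — 2 statements merged into one kernel-verified Lean document; each statement's English description precedes it below -/
import Mathlib

section
/- Let G be a finite simple graph on V = {x_1, ..., x_n} with cover ideal J = J(G) ⊆ S = K[x_1, ..., x_n]. Then J^2 has the irredundant primary decomposition J^2 = [⋂_{e ∈ E(G)} p_e^2] ∩ [⋂_{W : G_W is an induced odd cycle} p_W^{⟨2⟩}], where for an edge e = {x_i, x_j} we write p_e = (x_i, x_j), and for a subset W ⊆ V we write p_W^{⟨2⟩} = (x_i^2 : x_i ∈ W). -/
open MvPolynomial

/-- A finite simple graph on vertex set `Fin n`, presented as a hypergraph all of whose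
edges have cardinality exactly two. -/
structure GraphOn (n : ℕ) where
  edges : Finset (Finset (Fin n))
  card_eq : ∀ e ∈ edges, e.card = 2

/-- `w` is a vertex cover of `G`: it meets every edge. -/
def IsCover {n : ℕ} (G : GraphOn n) (w : Finset (Fin n)) : Prop :=
  ∀ e ∈ G.edges, (w ∩ e).Nonempty

/-- The cover ideal of `G`. -/
noncomputable def coverIdeal {n : ℕ} (K : Type*) [Field K] (G : GraphOn n) :
    Ideal (MvPolynomial (Fin n) K) :=
  Ideal.span {m | ∃ w : Finset (Fin n), IsCover G w ∧ m = ∏ i ∈ w, X i}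

/-- The induced subgraph of `G` on `W` is an odd cycle. -/
def IsInducedOddCycle {n : ℕ} (G : GraphOn n) (W : Finset (Fin n)) : Prop :=
  3 ≤ W.card ∧ Odd W.card ∧
    ∃ f : ZMod W.card → Fin n, Function.Injective f ∧ (∀ i, f i ∈ W) ∧
      (∀ w ∈ W, ∃ i, f i = w) ∧
      (∀ i, ({f i, f (i + 1)} : Finset (Fin n)) ∈ G.edges) ∧
      (∀ e ∈ G.edges, e ⊆ W → ∃ i, e = ({f i, f (i + 1)} : Finset (Fin n)))

/-- The index set for the components of the primary decomposition of `J(G)²`: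
the edges of `G` together with the vertex sets of induced odd cycles of `G`. -/
def DecompIndex {n : ℕ} (G : GraphOn n) : Type :=
  {e : Finset (Fin n) // e ∈ G.edges} ⊕ {W : Finset (Fin n) // IsInducedOddCycle G W}

/-- The components of the primary decomposition of `J(G)²`: `p_e² = (x_i, x_j)²` for an
edge `e = {x_i, x_j}`, and `p_W^⟨2⟩ = (x_i² : x_i ∈ W)` for an induced odd cycle on `W`. -/
noncomputable def decompComponent {n : ℕ} (K : Type*) [Field K] (G : GraphOn n) :
    DecompIndex G → Ideal (MvPolynomial (Fin n) K)
  | Sum.inl e => (Ideal.span {p | ∃ i ∈ e.1, p = (X i : MvPolynomial (Fin n) K)}) ^ 2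
  | Sum.inr W => Ideal.span {p | ∃ i ∈ W.1, p = (X i : MvPolynomial (Fin n) K) ^ 2}

open scoped Pointwise in
theorem mem_sq_span_monomial_image {σ R : Type*} [CommSemiring R] {A : Set (σ →₀ ℕ)}
    {f : MvPolynomial σ R} :
    f ∈ Ideal.span ((fun s => monomial s (1 : R)) '' A) ^ 2 ↔
      ∀ m ∈ f.support, ∃ a ∈ A, ∃ b ∈ A, a + b ≤ m := by
  have h : ((fun s => monomial s (1 : R)) '' A) * ((fun s => monomial s (1 : R)) '' A) =
      (fun s => monomial s (1 : R)) '' (A + A) := by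
    ext p
    simp only [Set.mem_mul, Set.mem_add, Set.mem_image]
    constructor
    · rintro ⟨_, ⟨a, ha, rfl⟩, _, ⟨b, hb, rfl⟩, rfl⟩
      exact ⟨a + b, ⟨a, ha, b, hb, rfl⟩, by simp [monomial_mul]⟩
    · rintro ⟨_, ⟨a, ha, b, hb, rfl⟩, rfl⟩
      exact ⟨_, ⟨a, ha, rfl⟩, _, ⟨b, hb, rfl⟩, by simp [monomial_mul]⟩
  rw [sq, Ideal.span_mul_span', h, mem_ideal_span_monomial_image]
  refine forall₂_congr fun m _ => ⟨?_, ?_⟩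
  · rintro ⟨_, ⟨a, ha, b, hb, rfl⟩, h⟩
    exact ⟨a, ha, b, hb, h⟩
  · rintro ⟨a, ha, b, hb, h⟩
    exact ⟨_, ⟨a, ha, b, hb, rfl⟩, h⟩

theorem exists_coeff_eq_ite {σ R : Type*} [CommSemiring R] (p : (σ →₀ ℕ) → Prop)
    [DecidablePred p] (f : MvPolynomial σ R) :
    ∃ g : MvPolynomial σ R, ∀ a, coeff a g = if p a then coeff a f else 0 := by
  classical
  refine ⟨∑ a ∈ f.support.filter p, monomial a (coeff a f), fun a => ?_⟩
  simp only [coeff_sum, coeff_monomial, Finset.sum_ite_eq', Finset.mem_filter, mem_support_iff]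
  by_cases ha : coeff a f = 0 <;> simp [ha]

theorem exists_add_eq_of_coeff_mul_ne_zero {σ R : Type*} [CommSemiring R]
    {f g : MvPolynomial σ R} {c : σ →₀ ℕ} (h : coeff c (f * g) ≠ 0) :
    ∃ a b, coeff a f ≠ 0 ∧ coeff b g ≠ 0 ∧ a + b = c := by
  classical
  obtain ⟨a, ha, b, hb, hc⟩ := Finset.mem_add.1 (support_mul f g (mem_support_iff.2 h))
  exact ⟨a, b, mem_support_iff.1 ha, mem_support_iff.1 hb, hc⟩

theorem X_mem_radical_iff {σ R : Type*} [CommSemiring R] [Nontrivial R]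
    {I : Ideal (MvPolynomial σ R)} {W : Finset σ} {P : (σ →₀ ℕ) → Prop}
    (hI : ∀ f, f ∈ I ↔ ∀ a ∈ f.support, P a)
    (hP : ∀ a b : σ →₀ ℕ, (∀ i ∈ W, a i = b i) → P a → P b) (h0 : ¬ P 0)
    (hX : ∀ i ∈ W, P (Finsupp.single i 2)) (i : σ) :
    (X i : MvPolynomial σ R) ∈ I.radical ↔ i ∈ W := by
  classical
  have key (k : ℕ) : (X i : MvPolynomial σ R) ^ k ∈ I ↔ P (Finsupp.single i k) := by
    rw [hI, X_pow_eq_monomial, support_monomial]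
    simp
  refine ⟨fun ⟨k, hk⟩ => ?_, fun hi => ⟨2, (key 2).2 (hX i hi)⟩⟩
  by_contra hi
  refine h0 (hP _ _ (fun j hj => ?_) ((key k).1 hk))
  rw [Finsupp.single_apply, if_neg (by rintro rfl; exact hi hj), Finsupp.zero_apply]

theorem isPrimary_of_mem_iff {σ R : Type*} [CommRing R] [IsDomain R]
    {I : Ideal (MvPolynomial σ R)} {W : Finset σ} {P : (σ →₀ ℕ) → Prop}
    (hI : ∀ f, f ∈ I ↔ ∀ a ∈ f.support, P a)
    (hP : ∀ a b : σ →₀ ℕ, (∀ i ∈ W, a i = b i) → P a → P b) (h0 : ¬ P 0)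
    (hX : ∀ i ∈ W, P (Finsupp.single i 2)) : I.IsPrimary := by
  classical
  rw [Ideal.isPrimary_iff]
  refine ⟨fun h => h0 ?_, fun {x y} hxy => ?_⟩
  · have h1 : (1 : MvPolynomial σ R) ∈ I := h ▸ Submodule.mem_top
    exact (hI 1).1 h1 0 (by simp)
  by_contra! hcon
  obtain ⟨hx, hy⟩ := hcon
  -- the degree in the variables indexed by `W`
  set wt : (σ →₀ ℕ) → ℕ := fun a => ∑ i ∈ W, a i with hwt
  have wt_add (a b) : wt (a + b) = wt a + wt b := by simp [hwt, Finset.sum_add_distrib]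
  obtain ⟨b₀, hb₀, hb₀W⟩ : ∃ b, coeff b y ≠ 0 ∧ wt b = 0 := by
    by_contra! hc
    refine hy ?_
    have hle : Ideal.span (X '' (W : Set σ)) ≤ I.radical := by
      rw [Ideal.span_le]
      rintro _ ⟨i, hi, rfl⟩
      exact (X_mem_radical_iff hI hP h0 hX i).2 hi
    refine hle (mem_ideal_span_X_image.2 fun m hm => ?_)
    by_contra! h
    exact hc m (mem_support_iff.1 hm) (Finset.sum_eq_zero h)
  have hex : ∃ d a, coeff a x ≠ 0 ∧ ¬ P a ∧ wt a = d := by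
    rw [hI] at hx
    push Not at hx
    obtain ⟨a, ha, hPa⟩ := hx
    exact ⟨_, a, mem_support_iff.1 ha, hPa, rfl⟩
  set d := Nat.find hex with hd
  obtain ⟨a₀, ha₀, hPa₀, hda₀⟩ := Nat.find_spec hex
  have hmin (a) (ha : coeff a x ≠ 0) (hPa : ¬ P a) : d ≤ wt a :=
    Nat.find_min' hex ⟨a, ha, hPa, rfl⟩
  obtain ⟨xP, hxP⟩ := exists_coeff_eq_ite P x
  obtain ⟨xd, hxd⟩ := exists_coeff_eq_ite (fun a => ¬ P a ∧ wt a = d) x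
  obtain ⟨y₀, hy₀⟩ := exists_coeff_eq_ite (fun b => wt b = 0) y
  have hxd0 : xd ≠ 0 := fun h => ha₀ <| by
    have := hxd a₀
    rwa [if_pos ⟨hPa₀, hda₀⟩, h, coeff_zero, eq_comm] at this
  have hy00 : y₀ ≠ 0 := fun h => hb₀ <| by
    have := hy₀ b₀
    rwa [if_pos hb₀W, h, coeff_zero, eq_comm] at this
  obtain ⟨c, hc⟩ := ne_zero_iff.1 (mul_ne_zero hxd0 hy00)
  obtain ⟨a, b, ha, hb, rfl⟩ := exists_add_eq_of_coeff_mul_ne_zero hc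
  have ha' : ¬ P a ∧ wt a = d := by
    by_contra h
    rw [hxd, if_neg h] at ha
    exact ha rfl
  have hb' : wt b = 0 := by
    by_contra h
    rw [hy₀, if_neg h] at hb
    exact hb rfl
  have hPc : ¬ P (a + b) := fun h => ha'.1 <| hP _ _ (fun i hi => by
    simp [Finset.sum_eq_zero_iff.1 hb' i hi]) h
  have hwc : wt (a + b) = d := by rw [wt_add, hb', ha'.2, add_zero]
  have hmem {f} (hf : f ∈ I) : coeff (a + b) f = 0 := by
    by_contra h
    exact hPc ((hI f).1 hf _ (mem_support_iff.2 h))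
  have hxPI : xP ∈ I := by
    refine (hI _).2 fun m hm => ?_
    by_contra h
    rw [mem_support_iff, hxP, if_neg h] at hm
    exact hm rfl
  have h1 : coeff (a + b) ((x - xP - xd) * y) = 0 := by
    by_contra h
    obtain ⟨u, v, hu, -, huv⟩ := exists_add_eq_of_coeff_mul_ne_zero h
    rw [coeff_sub, coeff_sub, hxP, hxd] at hu
    have huP : ¬ P u := fun h => hu (by simp [h])
    have hux : coeff u x ≠ 0 := fun h => hu (by simp [h])
    have := hmin u hux huP
    have hud : wt u ≠ d := fun h => hu (by simp [h, huP])
    rw [← huv, wt_add] at hwc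
    omega
  have h2 : coeff (a + b) (xd * (y - y₀)) = 0 := by
    by_contra h
    obtain ⟨u, v, hu, hv, huv⟩ := exists_add_eq_of_coeff_mul_ne_zero h
    rw [coeff_sub, hy₀] at hv
    have hvw : wt v ≠ 0 := fun h => hv (by simp [h])
    have hud : wt u = d := by
      by_contra h
      exact hu (by rw [hxd, if_neg fun h' => h h'.2])
    rw [← huv, wt_add] at hwc
    omega
  refine hc ?_
  have : xd * y₀ = x * y - xP * y - (x - xP - xd) * y - xd * (y - y₀) := by ring
  rw [this, coeff_sub, coeff_sub, coeff_sub, h1, h2, hmem hxy, hmem (I.mul_mem_right y hxPI)]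
  simp

/-- A closed walk of length `k`, as a sequence of vertices. -/
def IsClosedWalkSeq {V : Type*} (H : SimpleGraph V) (k : ℕ) (f : ℕ → V) : Prop :=
  f 0 = f k ∧ ∀ i < k, H.Adj (f i) (f (i + 1))

namespace IsClosedWalkSeq

variable {V : Type*} {H : SimpleGraph V} {k : ℕ} {f : ℕ → V}

theorem exists_of_not_colorable_two (h : ¬ H.Colorable 2) :
    ∃ k, Odd k ∧ ∃ f, IsClosedWalkSeq H k f := by
  rw [SimpleGraph.two_colorable_iff_forall_loop_even] at h
  push Not at h
  obtain ⟨u, w, hw⟩ := h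
  exact ⟨w.length, Nat.not_even_iff_odd.1 hw, w.getVert, by simp, fun i hi =>
    w.adj_getVert_succ hi⟩

/-- The part of a closed walk between two visits of the same vertex. -/
theorem inner_of_eq (hf : IsClosedWalkSeq H k f) {i j : ℕ} (hij : i ≤ j) (hj : j ≤ k)
    (h : f i = f j) : IsClosedWalkSeq H (j - i) (fun m => f (i + m)) :=
  ⟨by simp [hij, h], fun m hm => hf.2 (i + m) (by omega)⟩

/-- A closed walk with the part between two visits of the same vertex removed. -/
theorem outer_of_eq (hf : IsClosedWalkSeq H k f) {i j : ℕ} (hij : i ≤ j) (hj : j ≤ k)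
    (h : f i = f j) :
    IsClosedWalkSeq H (k - (j - i)) (fun m => if m ≤ i then f m else f (m + (j - i))) := by
  refine ⟨?_, fun m hm => ?_⟩
  · rcases eq_or_lt_of_le hj with rfl | hj
    · simp [h, show j - (j - i) = i by omega, hf.1]
    · simp [show ¬ k - (j - i) ≤ i by omega, show k - (j - i) + (j - i) = k by omega, hf.1]
  · rcases lt_trichotomy m i with hm' | rfl | hm'
    · simpa [hm'.le, show m + 1 ≤ i by omega] using hf.2 m (by omega)
    · have := hf.2 j (by omega)
      simpa [h, show m + 1 + (j - m) = j + 1 by omega] using this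
    · have := hf.2 (m + (j - i)) (by omega)
      simpa [hm'.not_ge, show ¬ m + 1 ≤ i by omega, add_right_comm] using this

/-- The part of a closed walk between the ends of a chord, closed up by the chord. -/
theorem inner_of_adj (hf : IsClosedWalkSeq H k f) {i j : ℕ} (hij : i ≤ j) (hj : j ≤ k)
    (h : H.Adj (f i) (f j)) :
    IsClosedWalkSeq H (j - i + 1) (fun m => if m ≤ j - i then f (i + m) else f i) := by
  refine ⟨by simp, fun m hm => ?_⟩
  rcases Nat.lt_or_ge m (j - i) with hm' | hm'
  · have := hf.2 (i + m) (by omega)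
    simpa [hm'.le, show m + 1 ≤ j - i by omega, add_assoc] using this
  · obtain rfl : m = j - i := by omega
    simpa [show i + (j - i) = j by omega] using h.symm

/-- A closed walk with the part between the ends of a chord replaced by the chord. -/
theorem outer_of_adj (hf : IsClosedWalkSeq H k f) {i j : ℕ} (hij : i < j) (hj : j ≤ k)
    (h : H.Adj (f i) (f j)) :
    IsClosedWalkSeq H (k - (j - i) + 1)
      (fun m => if m ≤ i then f m else f (m + (j - i - 1))) := by
  refine ⟨?_, fun m hm => ?_⟩
  · simp [show ¬ k - (j - i) + 1 ≤ i by omega,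
      show k - (j - i) + 1 + (j - i - 1) = k by omega, hf.1]
  · rcases lt_trichotomy m i with hm' | rfl | hm'
    · simpa [hm'.le, show m + 1 ≤ i by omega] using hf.2 m (by omega)
    · simpa [show m + 1 + (j - m - 1) = j by omega] using h
    · have := hf.2 (m + (j - i - 1)) (by omega)
      simpa [hm'.not_ge, show ¬ m + 1 ≤ i by omega, add_right_comm] using this

theorem injOn_of_minimal (hf : IsClosedWalkSeq H k f) (hk : Odd k)
    (hmin : ∀ l < k, Odd l → ∀ g, ¬ IsClosedWalkSeq H l g) {i j : ℕ} (hij : i < j) (hj : j < k) :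
    f i ≠ f j := by
  intro h
  have hin := hf.inner_of_eq hij.le hj.le h
  have hout := hf.outer_of_eq hij.le hj.le h
  rcases Nat.even_or_odd (j - i) with he | ho
  · exact hmin _ (by omega) (Nat.Odd.sub_even (by omega) hk he) _ hout
  · exact hmin _ (by omega) ho _ hin

theorem not_adj_of_minimal (hf : IsClosedWalkSeq H k f) (hk : Odd k)
    (hmin : ∀ l < k, Odd l → ∀ g, ¬ IsClosedWalkSeq H l g) {i j : ℕ} (hij : i < j) (hj : j < k)
    (h : H.Adj (f i) (f j)) : j = i + 1 ∨ i = 0 ∧ j + 1 = k := by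
  by_contra! hne
  have hin := hf.inner_of_adj hij.le hj.le h
  have hout := hf.outer_of_adj hij hj.le h
  rcases Nat.even_or_odd (j - i) with he | ho
  · exact hmin _ (by omega) he.add_one _ hin
  · exact hmin _ (by omega) (Nat.Odd.sub_odd hk ho).add_one _ hout

end IsClosedWalkSeq

theorem isInducedOddCycle_of_card_eq {n : ℕ} {G : GraphOn n} {W : Finset (Fin n)} {k : ℕ}
    (hW : W.card = k) (hk : 3 ≤ k) (hodd : Odd k) (f : ZMod k → Fin n)
    (hinj : Function.Injective f) (hmem : ∀ i, f i ∈ W) (hsurj : ∀ w ∈ W, ∃ i, f i = w)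
    (hedge : ∀ i, ({f i, f (i + 1)} : Finset (Fin n)) ∈ G.edges)
    (hchord : ∀ e ∈ G.edges, e ⊆ W → ∃ i, e = ({f i, f (i + 1)} : Finset (Fin n))) :
    IsInducedOddCycle G W := by
  subst hW
  exact ⟨hk, hodd, f, hinj, hmem, hsurj, hedge, hchord⟩

/-- The graph induced by `G` on the vertices satisfying `p`, with all other vertices isolated. -/
def GraphOn.inducedOn {n : ℕ} (G : GraphOn n) (p : Fin n → Prop) : SimpleGraph (Fin n) where
  Adj u v := u ≠ v ∧ ({u, v} : Finset (Fin n)) ∈ G.edges ∧ p u ∧ p v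
  symm := ⟨fun u v ⟨h, he, hu, hv⟩ => ⟨h.symm, Finset.pair_comm u v ▸ he, hv, hu⟩⟩
  loopless := ⟨fun _ h => h.1 rfl⟩

theorem GraphOn.exists_edge_eq {n : ℕ} (G : GraphOn n) {e : Finset (Fin n)} (he : e ∈ G.edges) :
    ∃ u v, u ≠ v ∧ e = {u, v} :=
  Finset.card_eq_two.1 (G.card_eq e he)

/-- A graph that is not bipartite has an induced odd cycle. -/
theorem GraphOn.exists_isInducedOddCycle {n : ℕ} (G : GraphOn n) (p : Fin n → Prop)
    (h : ¬ (G.inducedOn p).Colorable 2) :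
    ∃ W, IsInducedOddCycle G W ∧ ∀ w ∈ W, p w := by
  classical
  have hex := IsClosedWalkSeq.exists_of_not_colorable_two h
  obtain ⟨hodd, f, hf⟩ := Nat.find_spec hex
  set k := Nat.find hex with hk
  have hmin (l) (hl : l < k) (hlo : Odd l) (g) : ¬ IsClosedWalkSeq (G.inducedOn p) l g :=
    fun hg => Nat.find_min hex hl ⟨hlo, g, hg⟩
  have hk1 : k ≠ 1 := fun h1 => by
    have := hf.2 0 (by omega)
    rw [hf.1, h1] at this
    exact this.1 rfl
  have hk3 : 3 ≤ k := by obtain ⟨r, hr⟩ := hodd; omega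
  have : NeZero k := ⟨by omega⟩
  have hinj {i j : ℕ} (hi : i < k) (hj : j < k) (hij : f i = f j) : i = j := by
    rcases lt_trichotomy i j with h | h | h
    · exact absurd hij (hf.injOn_of_minimal hodd hmin h hj)
    · exact h
    · exact absurd hij.symm (hf.injOn_of_minimal hodd hmin h hi)
  have hsucc (i : ZMod k) : f (i + 1).val = f (i.val + 1) := by
    have hi := ZMod.val_lt i
    rw [ZMod.val_add, ZMod.val_one'' (by omega)]
    rcases eq_or_lt_of_le (Nat.succ_le_of_lt hi) with h | h
    · rw [show i.val + 1 = k from h, Nat.mod_self, hf.1]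
    · rw [Nat.mod_eq_of_lt h]
  refine ⟨(Finset.range k).image f, ?_, ?_⟩
  · refine isInducedOddCycle_of_card_eq (k := k) ?_ hk3 hodd (fun i => f i.val) ?_ ?_ ?_ ?_ ?_
    · rw [Finset.card_image_of_injOn, Finset.card_range]
      exact fun i hi j hj hij => hinj (by simpa using hi) (by simpa using hj) hij
    · exact fun i j hij => ZMod.val_injective k (hinj (ZMod.val_lt i) (ZMod.val_lt j) hij)
    · exact fun i => Finset.mem_image_of_mem _ (Finset.mem_range.2 (ZMod.val_lt i))
    · intro w hw
      obtain ⟨i, hi, rfl⟩ := Finset.mem_image.1 hw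
      exact ⟨i, by simp [ZMod.val_cast_of_lt (Finset.mem_range.1 hi)]⟩
    · intro i
      simp only [hsucc]
      exact (hf.2 _ (ZMod.val_lt i)).2.1
    · have key {i j : ℕ} (hij : i < j) (hj : j < k)
          (he : ({f i, f j} : Finset (Fin n)) ∈ G.edges) :
          ∃ l : ZMod k, ({f i, f j} : Finset (Fin n)) = {f l.val, f (l + 1).val} := by
        have hadj : (G.inducedOn p).Adj (f i) (f j) :=
          ⟨hf.injOn_of_minimal hodd hmin hij hj, he, (hf.2 i (by omega)).2.2.1,
            (hf.2 j hj).2.2.1⟩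
        rcases hf.not_adj_of_minimal hodd hmin hij hj hadj with rfl | ⟨rfl, h⟩
        · refine ⟨i, ?_⟩
          rw [hsucc, ZMod.val_cast_of_lt (by omega)]
        · refine ⟨j, ?_⟩
          rw [hsucc, ZMod.val_cast_of_lt (by omega), h, ← hf.1, Finset.pair_comm]
      intro e he heW
      obtain ⟨u, v, huv, rfl⟩ := G.exists_edge_eq he
      obtain ⟨i, hi, rfl⟩ := Finset.mem_image.1 (heW (Finset.mem_insert_self _ _))
      obtain ⟨j, hj, rfl⟩ := Finset.mem_image.1
        (heW (Finset.mem_insert_of_mem (Finset.mem_singleton_self _)))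
      rw [Finset.mem_range] at hi hj
      rcases lt_trichotomy i j with h | rfl | h
      · exact key h hj he
      · exact absurd rfl huv
      · rw [Finset.pair_comm] at he ⊢
        exact key h hi he
  · intro w hw
    obtain ⟨i, hi, rfl⟩ := Finset.mem_image.1 hw
    exact (hf.2 i (Finset.mem_range.1 hi)).2.2.1

theorem IsInducedOddCycle.eq_of_subset {n : ℕ} {G : GraphOn n} {W W' : Finset (Fin n)}
    (hW : IsInducedOddCycle G W) (hW' : IsInducedOddCycle G W') (hsub : W' ⊆ W) : W' = W := by
  obtain ⟨h3, -, f, hinj, -, hsurj, -, hchord⟩ := hW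
  obtain ⟨h3', -, g, ginj, gmem, gsurj, gedge, -⟩ := hW'
  have : NeZero W.card := ⟨by omega⟩
  have hpair (j) : ∃ i, ({g j, g (j + 1)} : Finset (Fin n)) = {f i, f (i + 1)} :=
    hchord _ (gedge j) (by
      intro x hx
      rcases Finset.mem_insert.1 hx with rfl | hx
      · exact hsub (gmem _)
      · rw [Finset.mem_singleton.1 hx]; exact hsub (gmem _))
  have two_ne : (1 : ZMod W'.card) + 1 ≠ 0 := fun h => by
    have h2 : ((2 : ℕ) : ZMod W'.card) = 0 := by push_cast; rw [← h]; norm_num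
    have := Nat.le_of_dvd (by omega) ((ZMod.natCast_eq_zero_iff _ _).1 h2)
    omega
  have hstep (i : ZMod W.card) (hi : f i ∈ W') : f (i + 1) ∈ W' := by
    obtain ⟨j, hj⟩ := gsurj _ hi
    obtain ⟨a, ha⟩ := hpair j
    obtain ⟨b, hb⟩ := hpair (j - 1)
    rw [sub_add_cancel] at hb
    have hab : a ≠ b := by
      rintro rfl
      have hmem : g (j + 1) ∈ ({g (j - 1), g j} : Finset (Fin n)) := by
        rw [hb, ← ha]; simp
      rcases Finset.mem_insert.1 hmem with h | h
      · have := ginj h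
        refine two_ne ?_
        linear_combination this
      · have := ginj (Finset.mem_singleton.1 h)
        refine two_ne ?_
        linear_combination 2 * this
    have hia : i = a ∨ i = a + 1 := by
      have : f i ∈ ({f a, f (a + 1)} : Finset (Fin n)) := by rw [← ha, hj]; simp
      simpa [hinj.eq_iff] using this
    have hib : i = b ∨ i = b + 1 := by
      have : f i ∈ ({f b, f (b + 1)} : Finset (Fin n)) := by rw [← hb, hj]; simp
      simpa [hinj.eq_iff] using this
    have ha' : f (a + 1) ∈ W' := by
      have : f (a + 1) ∈ ({g j, g (j + 1)} : Finset (Fin n)) := by rw [ha]; simp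
      rcases Finset.mem_insert.1 this with h | h
      · rw [h]; exact gmem _
      · rw [Finset.mem_singleton.1 h]; exact gmem _
    have hb' : f (b + 1) ∈ W' := by
      have : f (b + 1) ∈ ({g (j - 1), g j} : Finset (Fin n)) := by rw [hb]; simp
      rcases Finset.mem_insert.1 this with h | h
      · rw [h]; exact gmem _
      · rw [Finset.mem_singleton.1 h]; exact gmem _
    rcases hia with rfl | hia
    · exact ha'
    · rcases hib with rfl | hib
      · exact hb'
      · exact absurd (add_right_cancel (hia.symm.trans hib)) hab
  obtain ⟨i₀, hi₀⟩ := hsurj _ (hsub (gmem 0))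
  have hall (m : ℕ) : f (i₀ + m) ∈ W' := by
    induction m with
    | zero => simpa [hi₀] using gmem 0
    | succ m ih => simpa [add_assoc] using hstep _ ih
  refine hsub.antisymm fun w hw => ?_
  obtain ⟨i, rfl⟩ := hsurj w hw
  simpa using hall (i - i₀).val

/-- The multidegrees `a` whose monomial lies in the component of index `i`. -/
def decompExponent {n : ℕ} (G : GraphOn n) : DecompIndex G → (Fin n →₀ ℕ) → Prop
  | Sum.inl e => fun a => 2 ≤ ∑ i ∈ e.1, a i
  | Sum.inr W => fun a => ∃ i ∈ W.1, 2 ≤ a i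

/-- The indicator exponent of a set of vertices. -/
noncomputable def indicatorExponent {n : ℕ} (w : Finset (Fin n)) : Fin n →₀ ℕ :=
  Finsupp.equivFunOnFinite.symm fun i => if i ∈ w then 1 else 0

theorem indicatorExponent_apply {n : ℕ} (w : Finset (Fin n)) (i : Fin n) :
    indicatorExponent w i = if i ∈ w then 1 else 0 := rfl

theorem exists_isCover_of_decompExponent {n : ℕ} {G : GraphOn n} {a : Fin n →₀ ℕ}
    (h : ∀ i, decompExponent G i a) :
    ∃ w w', IsCover G w ∧ IsCover G w' ∧ indicatorExponent w + indicatorExponent w' ≤ a := by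
  classical
  have hcol : (G.inducedOn fun i => a i = 1).Colorable 2 := by
    by_contra hc
    obtain ⟨W, hW, hp⟩ := G.exists_isInducedOddCycle _ hc
    obtain ⟨i, hi, h2⟩ := h (Sum.inr ⟨W, hW⟩)
    have := hp i hi
    omega
  obtain ⟨c⟩ := hcol
  have hcover (t : Fin 2) :
      IsCover G (Finset.univ.filter fun i => 2 ≤ a i ∨ a i = 1 ∧ c i = t) := by
    intro e he
    have hdeg : 2 ≤ ∑ i ∈ e, a i := h (Sum.inl ⟨e, he⟩)
    obtain ⟨u, v, huv, rfl⟩ := G.exists_edge_eq he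
    rw [Finset.sum_pair huv] at hdeg
    by_cases hu : 2 ≤ a u
    · exact ⟨u, by simp [hu]⟩
    by_cases hv : 2 ≤ a v
    · exact ⟨v, by simp [hv]⟩
    have hu1 : a u = 1 := by omega
    have hv1 : a v = 1 := by omega
    have hne : c u ≠ c v := c.valid ⟨huv, he, hu1, hv1⟩
    by_cases hut : c u = t
    · exact ⟨u, by simp [hu1, hut]⟩
    · have hvt : c v = t := by omega
      exact ⟨v, by simp [hv1, hvt]⟩
  refine ⟨_, _, hcover 0, hcover 1, fun i => ?_⟩
  rw [Finsupp.add_apply, indicatorExponent_apply, indicatorExponent_apply]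
  by_cases h2 : 2 ≤ a i
  · simp [h2]
  · by_cases h1 : a i = 1
    · have : c i = 0 ∨ c i = 1 := by omega
      rcases this with hc | hc <;> simp [h1, hc]
    · simp [h1, h2]

theorem decompExponent_of_isCover {n : ℕ} {G : GraphOn n} {a : Fin n →₀ ℕ}
    {w w' : Finset (Fin n)} (hw : IsCover G w) (hw' : IsCover G w')
    (hle : indicatorExponent w + indicatorExponent w' ≤ a) (i : DecompIndex G) :
    decompExponent G i a := by
  classical
  have hle' (i) : (if i ∈ w then 1 else 0) + (if i ∈ w' then 1 else 0) ≤ a i := hle i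
  rcases i with ⟨e, he⟩ | ⟨W, hW⟩
  · change 2 ≤ ∑ i ∈ e, a i
    refine le_trans ?_ (Finset.sum_le_sum fun i _ => hle' i)
    have h1 := (hw e he).card_pos
    have h2 := (hw' e he).card_pos
    rw [Finset.sum_add_distrib]
    simp only [Finset.sum_boole, Finset.filter_mem_eq_inter, Nat.cast_id]
    rw [Finset.inter_comm] at h1 h2
    omega
  · change ∃ i ∈ W, 2 ≤ a i
    by_contra! hlt
    obtain ⟨h3, hodd, f, -, hmem, -, hedge, -⟩ := hW
    have hdisj (i) (h : f i ∈ w) : f i ∉ w' := fun h' => by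
      have h1 := hle' (f i)
      have h2 := hlt _ (hmem i)
      rw [if_pos h, if_pos h'] at h1
      omega
    have hcov {w : Finset (Fin n)} (hw : IsCover G w) (i) : f i ∈ w ∨ f (i + 1) ∈ w := by
      obtain ⟨x, hx⟩ := hw _ (hedge i)
      simp only [Finset.mem_inter, Finset.mem_insert, Finset.mem_singleton] at hx
      rcases hx with ⟨hx, rfl | rfl⟩ <;> simp [hx]
    have halt (i) : f (i + 1) ∈ w ↔ f i ∉ w :=
      ⟨fun h h' => (hcov hw' i).elim (hdisj _ h') (hdisj _ h), fun h => (hcov hw i).resolve_left h⟩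
    have hall (m : ℕ) : f (m : ZMod W.card) ∈ w ↔ (Even m ↔ f 0 ∈ w) := by
      induction m with
      | zero => simp
      | succ m ih => rw [Nat.cast_succ, halt, ih, Nat.even_add_one]; tauto
    have := hall W.card
    rw [ZMod.natCast_self, ← Nat.not_odd_iff_even] at this
    tauto

theorem mem_coverIdeal_sq_iff {n : ℕ} {K : Type*} [Field K] {G : GraphOn n}
    {f : MvPolynomial (Fin n) K} :
    f ∈ coverIdeal K G ^ 2 ↔ ∀ a ∈ f.support, ∃ w w', IsCover G w ∧ IsCover G w' ∧
      indicatorExponent w + indicatorExponent w' ≤ a := by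
  have hmon (w : Finset (Fin n)) :
      monomial (indicatorExponent w) (1 : K) = ∏ i ∈ w, X i := by
    have h : indicatorExponent w = ∑ i ∈ w, Finsupp.single i 1 := by
      ext j
      simp [indicatorExponent_apply, Finsupp.finsetSum_apply, Finsupp.single_apply]
    rw [h, monomial_sum_one]
    rfl
  have h : coverIdeal K G = Ideal.span
      ((fun s => monomial s (1 : K)) '' (indicatorExponent '' {w | IsCover G w})) := by
    rw [Set.image_image, coverIdeal]
    congr 1
    ext p
    simp only [hmon, Set.mem_image, Set.mem_ofPred_eq, eq_comm]
  rw [h, mem_sq_span_monomial_image]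
  simp only [Set.exists_mem_image, Set.mem_ofPred_eq]
  refine forall₂_congr fun a _ => ⟨?_, ?_⟩
  · rintro ⟨w, hw, w', hw', h⟩
    exact ⟨w, w', hw, hw', h⟩
  · rintro ⟨w, w', hw, hw', h⟩
    exact ⟨w, hw, w', hw', h⟩

theorem mem_decompComponent_iff {n : ℕ} {K : Type*} [Field K] {G : GraphOn n}
    {i : DecompIndex G} {f : MvPolynomial (Fin n) K} :
    f ∈ decompComponent K G i ↔ ∀ a ∈ f.support, decompExponent G i a := by
  classical
  have hspan (k : ℕ) (W : Finset (Fin n)) :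
      Ideal.span {p | ∃ i ∈ W, p = (X i : MvPolynomial (Fin n) K) ^ k} = Ideal.span
        ((fun s => monomial s (1 : K)) '' ((fun i => Finsupp.single i k) '' (W : Set (Fin n)))) := by
    rw [Set.image_image]
    congr 1
    ext p
    simp only [Set.mem_image, Set.mem_ofPred_eq, X_pow_eq_monomial, eq_comm, Finset.mem_coe]
  rcases i with ⟨e, he⟩ | ⟨W, hW⟩
  · change f ∈ Ideal.span {p | ∃ i ∈ e, p = (X i : MvPolynomial (Fin n) K)} ^ 2 ↔
      ∀ a ∈ f.support, 2 ≤ ∑ i ∈ e, a i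
    have h := hspan 1 e
    simp only [pow_one] at h
    rw [h, mem_sq_span_monomial_image]
    simp only [Set.exists_mem_image, Finset.mem_coe]
    refine forall₂_congr fun a _ => ⟨?_, fun h2 => ?_⟩
    · rintro ⟨i, hi, j, hj, hle⟩
      refine le_trans ?_ (Finset.sum_le_sum fun x _ => hle x)
      simp [Finset.sum_add_distrib, Finsupp.single_apply, hi, hj]
    · obtain ⟨u, v, huv, rfl⟩ := G.exists_edge_eq he
      rw [Finset.sum_pair huv] at h2
      obtain ⟨i, hi, j, hj, hle⟩ : ∃ i ∈ ({u, v} : Finset (Fin n)),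
          ∃ j ∈ ({u, v} : Finset (Fin n)), i = j ∧ 2 ≤ a i ∨ i ≠ j ∧ 1 ≤ a i ∧ 1 ≤ a j := by
        by_cases hu : 2 ≤ a u
        · exact ⟨u, by simp, u, by simp, Or.inl ⟨rfl, hu⟩⟩
        by_cases hv : 2 ≤ a v
        · exact ⟨v, by simp, v, by simp, Or.inl ⟨rfl, hv⟩⟩
        exact ⟨u, by simp, v, by simp, Or.inr ⟨huv, by omega, by omega⟩⟩
      refine ⟨i, hi, j, hj, fun x => ?_⟩
      rw [Finsupp.add_apply, Finsupp.single_apply, Finsupp.single_apply]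
      grind
  · change f ∈ Ideal.span {p | ∃ i ∈ W, p = (X i : MvPolynomial (Fin n) K) ^ 2} ↔
      ∀ a ∈ f.support, ∃ i ∈ W, 2 ≤ a i
    rw [hspan, mem_ideal_span_monomial_image]
    simp only [Set.exists_mem_image, Finset.mem_coe, Finsupp.single_le_iff]

theorem monomial_one_mem_decompComponent_iff {n : ℕ} {K : Type*} [Field K] {G : GraphOn n}
    {i : DecompIndex G} {a : Fin n →₀ ℕ} :
    monomial a (1 : K) ∈ decompComponent K G i ↔ decompExponent G i a := by
  classical
  rw [mem_decompComponent_iff, support_monomial]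
  simp

/-- The vertex set of an edge or of an induced odd cycle. -/
def decompIndexSet {n : ℕ} {G : GraphOn n} : DecompIndex G → Finset (Fin n)
  | Sum.inl e => e.1
  | Sum.inr W => W.1

theorem decompIndexSet_injective {n : ℕ} {G : GraphOn n} :
    Function.Injective (decompIndexSet (G := G)) := by
  have hcard {e W : Finset (Fin n)} (he : e ∈ G.edges) (hW : IsInducedOddCycle G W) : e ≠ W := by
    rintro rfl
    have h2 := G.card_eq _ he
    have h3 := hW.1
    omega
  rintro (⟨e, he⟩ | ⟨W, hW⟩) (⟨e', he'⟩ | ⟨W', hW'⟩) h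
  · exact congrArg Sum.inl (Subtype.ext h)
  · exact absurd h (hcard he hW')
  · exact absurd h.symm (hcard he' hW)
  · exact congrArg Sum.inr (Subtype.ext h)

theorem decompExponent_congr {n : ℕ} {G : GraphOn n} (i : DecompIndex G) {a b : Fin n →₀ ℕ}
    (h : ∀ x ∈ decompIndexSet i, a x = b x) (ha : decompExponent G i a) :
    decompExponent G i b := by
  rcases i with e | W
  · exact ha.trans_eq (Finset.sum_congr rfl h)
  · obtain ⟨x, hx, h2⟩ := ha
    exact ⟨x, hx, h x hx ▸ h2⟩

theorem not_decompExponent_zero {n : ℕ} {G : GraphOn n} (i : DecompIndex G) :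
    ¬ decompExponent G i 0 := by
  rcases i with e | W <;> simp [decompExponent]

theorem decompExponent_single_two {n : ℕ} {G : GraphOn n} (i : DecompIndex G) {x : Fin n}
    (hx : x ∈ decompIndexSet i) : decompExponent G i (Finsupp.single x 2) := by
  classical
  rcases i with e | W
  · change x ∈ e.1 at hx
    simp [decompExponent, Finsupp.single_apply, hx]
  · exact ⟨x, hx, by simp⟩

theorem X_mem_radical_decompComponent_iff {n : ℕ} (K : Type*) [Field K] {G : GraphOn n}
    {i : DecompIndex G} {x : Fin n} :
    (X x : MvPolynomial (Fin n) K) ∈ (decompComponent K G i).radical ↔ x ∈ decompIndexSet i :=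
  X_mem_radical_iff (fun _ => mem_decompComponent_iff) (fun _ _ => decompExponent_congr i)
    (not_decompExponent_zero i) (fun _ => decompExponent_single_two i) x

/-- The exponent of a monomial that lies in every component except the one of index `i`. -/
noncomputable def irredundancyExponent {n : ℕ} {G : GraphOn n} : DecompIndex G → Fin n →₀ ℕ
  | Sum.inl e => Finsupp.equivFunOnFinite.symm fun x => if x ∈ e.1 then 0 else 2
  | Sum.inr W => Finsupp.equivFunOnFinite.symm fun x => if x ∈ W.1 then 1 else 2

theorem not_decompExponent_irredundancyExponent {n : ℕ} {G : GraphOn n} (i : DecompIndex G) :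
    ¬ decompExponent G i (irredundancyExponent i) := by
  rcases i with e | W
  · change ¬ 2 ≤ ∑ x ∈ e.1, if x ∈ e.1 then 0 else 2
    rw [Finset.sum_eq_zero fun x hx => if_pos hx]
    omega
  · rintro ⟨x, hx, h⟩
    change 2 ≤ if x ∈ W.1 then 1 else 2 at h
    rw [if_pos hx] at h
    omega

theorem decompExponent_irredundancyExponent {n : ℕ} {G : GraphOn n} {i j : DecompIndex G}
    (hij : j ≠ i) : decompExponent G j (irredundancyExponent i) := by
  rcases i with ⟨e, he⟩ | ⟨W, hW⟩
  · have hx : ∃ x ∈ decompIndexSet j, x ∉ e := by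
      by_contra! hsub
      refine hij (decompIndexSet_injective (Finset.eq_of_subset_of_card_le hsub ?_))
      change e.card ≤ _
      rw [G.card_eq e he]
      rcases j with ⟨e', he'⟩ | ⟨W', hW'⟩
      · exact (G.card_eq e' he').ge
      · exact (Nat.le_succ 2).trans hW'.1
    obtain ⟨x, hxj, hxe⟩ := hx
    have h2 : 2 ≤ irredundancyExponent (G := G) (Sum.inl ⟨e, he⟩) x :=
      (if_neg hxe : (if x ∈ e then 0 else 2) = 2).ge
    rcases j with e' | W'
    · exact h2.trans (Finset.single_le_sum
        (f := irredundancyExponent (G := G) (Sum.inl ⟨e, he⟩)) (fun _ _ => Nat.zero_le _) hxj)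
    · exact ⟨x, hxj, h2⟩
  · rcases j with ⟨e', he'⟩ | ⟨W', hW'⟩
    · change 2 ≤ ∑ x ∈ e', if x ∈ W then 1 else 2
      calc 2 = ∑ x ∈ e', 1 := by simp [G.card_eq e' he']
        _ ≤ _ := Finset.sum_le_sum fun x _ => by split_ifs <;> omega
    · have hsub : ¬ W' ⊆ W := fun h =>
        hij (decompIndexSet_injective (hW.eq_of_subset hW' h))
      obtain ⟨x, hx', hx⟩ := Finset.not_subset.1 hsub
      exact ⟨x, hx', (if_neg hx : (if x ∈ W then 1 else 2) = 2).ge⟩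

/-- For a finite simple graph `G` with cover ideal `J = J(G)`, the
ideal `J²` has the irredundant primary decomposition
`J² = [⋂_{e ∈ E(G)} p_e²] ∩ [⋂_{W induced odd cycle} p_W^⟨2⟩]`:
the intersection of all components equals `J²`, every component is primary, the
components have pairwise distinct radicals, and no component can be omitted. -/
theorem coverIdeal_sq_primary_decomposition {n : ℕ} (K : Type*) [Field K] (G : GraphOn n) :
    (coverIdeal K G ^ 2 = ⨅ i : DecompIndex G, decompComponent K G i) ∧
    (∀ i : DecompIndex G, (decompComponent K G i).IsPrimary) ∧
    (∀ i j : DecompIndex G, i ≠ j →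
      (decompComponent K G i).radical ≠ (decompComponent K G j).radical) ∧
    (∀ i : DecompIndex G,
      (⨅ j ∈ {j : DecompIndex G | j ≠ i}, decompComponent K G j) ≠ coverIdeal K G ^ 2) := by
  refine ⟨?_, fun i => ?_, fun i j hij h => hij ?_, fun i h => ?_⟩
  · ext f
    rw [mem_coverIdeal_sq_iff, Submodule.mem_iInf]
    simp only [mem_decompComponent_iff]
    refine ⟨fun h i a ha => ?_, fun h a ha =>
      exists_isCover_of_decompExponent fun i => h i a ha⟩
    obtain ⟨w, w', hw, hw', hle⟩ := h a ha
    exact decompExponent_of_isCover hw hw' hle i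
  · exact isPrimary_of_mem_iff (fun _ => mem_decompComponent_iff)
      (fun _ _ => decompExponent_congr i) (not_decompExponent_zero i)
      (fun _ => decompExponent_single_two i)
  · refine decompIndexSet_injective (Finset.ext fun x => ?_)
    rw [← X_mem_radical_decompComponent_iff K, h, X_mem_radical_decompComponent_iff]
  · have hmem : monomial (irredundancyExponent i) (1 : K) ∈ coverIdeal K G ^ 2 := by
      rw [← h]
      simp only [Submodule.mem_iInf, Set.mem_ofPred_eq, monomial_one_mem_decompComponent_iff]
      exact fun j hj => decompExponent_irredundancyExponent hj
    rw [mem_coverIdeal_sq_iff] at hmem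
    obtain ⟨w, w', hw, hw', hle⟩ := hmem (irredundancyExponent i) (by simp)
    exact not_decompExponent_irredundancyExponent i (decompExponent_of_isCover hw hw' hle i)
end

section
/- Let G be a finite simple graph on V = {x_1, ..., x_n} with cover ideal J = J(G) ⊆ S = K[x_1, ..., x_n]. Then the set of associated primes of S/J^2 is Ass(S/J^2) = { p_e : e ∈ E(G) } ∪ { p_W : G_W is an induced odd cycle of G }, where for a subset W ⊆ V, p_W = (x_i : x_i ∈ W). -/
open MvPolynomial

/-- The monomial prime generated by the variables indexed by `T`. -/
noncomputable def varPrime {n : ℕ} (K : Type*) [Field K] (T : Finset (Fin n)) :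
    Ideal (MvPolynomial (Fin n) K) :=
  Ideal.span {p | ∃ i ∈ T, p = X i}

namespace GraphOn

section Monomial

variable {n : ℕ} {K : Type*} [Field K]

/-- The predicate `φ` on exponents is monotone in the coordinates indexed by `W`. -/
def MonotoneInVars (W : Finset (Fin n)) (φ : (Fin n →₀ ℕ) → Prop) : Prop :=
  ∀ a b : Fin n →₀ ℕ, (∀ i ∈ W, a i ≤ b i) → φ a → φ b

theorem MonotoneInVars.isUpperSet {W : Finset (Fin n)} {φ : (Fin n →₀ ℕ) → Prop}
    (h : MonotoneInVars W φ) : IsUpperSet {a | φ a} :=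
  fun a b hab ha => h a b (fun i _ => hab i) ha

theorem mem_restrictSupportIdeal {s : Set (Fin n →₀ ℕ)} (hs : IsUpperSet s)
    (f : MvPolynomial (Fin n) K) :
    f ∈ restrictSupportIdeal K s hs ↔ ∀ a ∈ f.support, a ∈ s :=
  mem_restrictSupport_iff K

theorem mem_varPrime (W : Finset (Fin n)) (f : MvPolynomial (Fin n) K) :
    f ∈ varPrime K W ↔ ∀ a ∈ f.support, ∃ i ∈ W, a i ≠ 0 := by
  have h : {p : MvPolynomial (Fin n) K | ∃ i ∈ W, p = X i} = X '' (W : Set (Fin n)) := by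
    ext p
    simp [eq_comm]
  rw [varPrime, h, mem_ideal_span_X_image]
  simp

theorem mem_of_mul_mem {W : Finset (Fin n)} {φ : (Fin n →₀ ℕ) → Prop} (h : MonotoneInVars W φ)
    {f g : MvPolynomial (Fin n) K} (hg : g ∉ varPrime K W)
    (hgf : ∀ a ∈ (g * f).support, φ a) : ∀ a ∈ f.support, φ a := by
  classical
  by_contra hf
  push Not at hf
  obtain ⟨a₁, ha₁, hφa₁⟩ := hf
  rw [mem_varPrime] at hg
  push Not at hg
  obtain ⟨b₁, hb₁, hb₁W⟩ := hg
  let deg : (Fin n →₀ ℕ) → ℕ := fun a => ∑ i ∈ W, a i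
  obtain ⟨a₂, ha₂, hmin⟩ := (f.support.filter fun a => ¬ φ a).exists_min_image deg
    ⟨a₁, by simp only [Finset.mem_filter]; exact ⟨ha₁, hφa₁⟩⟩
  let A := f.support.filter fun a => ¬ φ a ∧ deg a = deg a₂
  let B := g.support.filter fun b => ∀ i ∈ W, b i = 0
  rw [Finset.mem_filter] at ha₂
  obtain ⟨b₀, hb₀, a₀, ha₀, huniq⟩ := UniqueSums.uniqueAdd_of_nonempty (A := B) (B := A)
    ⟨b₁, Finset.mem_filter.2 ⟨hb₁, hb₁W⟩⟩ ⟨a₂, Finset.mem_filter.2 ⟨ha₂.1, ha₂.2, rfl⟩⟩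
  rw [Finset.mem_filter] at hb₀ ha₀
  have hcoeff : coeff (b₀ + a₀) (g * f) = coeff b₀ g * coeff a₀ f := by
    rw [coeff_mul]
    refine Finset.sum_eq_single (b₀, a₀) ?_ (by simp)
    rintro ⟨b, a⟩ hba hne
    rw [Finset.HasAntidiagonal.mem_antidiagonal] at hba
    simp only at hba
    by_contra hne0
    have hbg : b ∈ g.support := mem_support_iff.2 (left_ne_zero_of_mul hne0)
    have haf : a ∈ f.support := mem_support_iff.2 (right_ne_zero_of_mul hne0)
    have hpt : ∀ i ∈ W, b i + a i = a₀ i := fun i hi => by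
      have := DFunLike.congr_fun hba i
      simpa [hb₀.2 i hi] using this
    have hna : ¬ φ a := fun ha =>
      ha₀.2.1 (h a a₀ (fun i hi => by have := hpt i hi; omega) ha)
    have hle : deg a₂ ≤ deg a := hmin a (Finset.mem_filter.2 ⟨haf, hna⟩)
    have hsum : deg b + deg a = deg a₀ := by
      simp only [deg, ← Finset.sum_add_distrib]
      exact Finset.sum_congr rfl hpt
    have hdb : deg b = 0 := by have := ha₀.2.2; omega
    have hb0 : ∀ i ∈ W, b i = 0 := by simpa [deg] using hdb
    have := huniq (Finset.mem_filter.2 ⟨hbg, hb0⟩)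
      (Finset.mem_filter.2 ⟨haf, hna, by have := ha₀.2.2; omega⟩) hba
    exact hne (Prod.ext this.1 this.2)
  have hmem : b₀ + a₀ ∈ (g * f).support := by
    rw [mem_support_iff, hcoeff]
    exact mul_ne_zero (mem_support_iff.1 hb₀.1) (mem_support_iff.1 ha₀.1)
  refine ha₀.2.1 (h _ _ (fun i hi => ?_) (hgf _ hmem))
  simp [hb₀.2 i hi]

theorem isPrime_varPrime (W : Finset (Fin n)) : (varPrime K W).IsPrime := by
  constructor
  · rw [Ideal.ne_top_iff_one, mem_varPrime]
    simp
  · intro g f hgf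
    by_contra! hcon
    refine hcon.2 ((mem_varPrime W f).2 (mem_of_mul_mem (W := W) ?_ hcon.1
      ((mem_varPrime W _).1 hgf)))
    rintro a b hab ⟨i, hi, hai⟩
    exact ⟨i, hi, by have := hab i hi; omega⟩

theorem mem_associatedPrimes_quotient {R : Type*} [CommRing R] [IsNoetherianRing R]
    {I P : Ideal R} :
    P ∈ associatedPrimes R (R ⧸ I) ↔ P.IsPrime ∧ ∃ f : R, ∀ r, r ∈ P ↔ r * f ∈ I := by
  rw [AssociatedPrimes.mem_iff, isAssociatedPrime_iff, and_congr_right_iff]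
  intro _
  rw [Ideal.Quotient.mk_surjective.exists]
  refine exists_congr fun f => ?_
  rw [SetLike.ext_iff]
  refine forall_congr' fun r => ?_
  rw [Submodule.mem_colon_singleton, Submodule.mem_bot, Algebra.smul_def,
    Ideal.Quotient.algebraMap_eq, ← map_mul, Ideal.Quotient.eq_zero_iff_mem]

/-- Associated primes of a finite intersection of monomial ideals, the one indexed by `W` being
generated by monomials in the variables of `W` and containing powers of these variables. -/
theorem exists_eq_varPrime_of_mem_associatedPrimes {I : Ideal (MvPolynomial (Fin n) K)}
    (T : Finset (Finset (Fin n))) (φ : Finset (Fin n) → (Fin n →₀ ℕ) → Prop)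
    (hφ : ∀ W ∈ T, MonotoneInVars W (φ W))
    (hpow : ∀ W ∈ T, ∀ i ∈ W, ∃ k, ∀ a : Fin n →₀ ℕ, k ≤ a i → φ W a)
    (hI : ∀ f, f ∈ I ↔ ∀ a ∈ f.support, ∀ W ∈ T, φ W a)
    {P : Ideal (MvPolynomial (Fin n) K)}
    (hP : P ∈ associatedPrimes (MvPolynomial (Fin n) K) (MvPolynomial (Fin n) K ⧸ I)) :
    ∃ W ∈ T, P = varPrime K W := by
  classical
  obtain ⟨hprime, f, hf⟩ := mem_associatedPrimes_quotient.1 hP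
  let Q : T → Ideal (MvPolynomial (Fin n) K) := fun W =>
    (restrictSupportIdeal K _ (hφ W.1 W.2).isUpperSet).colon {f}
  have hQ : ∀ W r, r ∈ Q W ↔ ∀ a ∈ (r * f).support, φ W.1 a := fun W r => by
    simp only [Q]
    rw [Submodule.mem_colon_singleton, smul_eq_mul, mem_restrictSupportIdeal]
    rfl
  have hPQ : ∀ r, r ∈ P ↔ ∀ W, r ∈ Q W := fun r => by
    rw [hf, hI]
    simp only [hQ, Subtype.forall]
    exact ⟨fun h W hW a ha => h a ha W hW, fun h a ha W hW => h W hW a ha⟩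
  obtain ⟨W, -, hW⟩ := (hprime.inf_le' (s := Finset.univ) (f := Q)).1 fun r hr =>
    (hPQ r).2 fun W => (Finset.inf_le (Finset.mem_univ W) : _ ≤ Q W) hr
  have hPW : ∀ r, r ∈ P ↔ r ∈ Q W := fun r => ⟨fun h => (hPQ r).1 h W, fun h => hW h⟩
  refine ⟨W.1, W.2, le_antisymm (fun r hr => ?_) ?_⟩
  · by_contra hrW
    refine hprime.ne_top ((Ideal.eq_top_iff_one _).2 ((hPW 1).2 ((hQ W 1).2 ?_)))
    rw [one_mul]
    exact mem_of_mul_mem (hφ W.1 W.2) hrW ((hQ W r).1 ((hPW r).1 hr))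
  · refine Ideal.span_le.2 ?_
    rintro _ ⟨i, hi, rfl⟩
    obtain ⟨k, hk⟩ := hpow W.1 W.2 i hi
    refine hprime.mem_of_pow_mem k ((hPW _).2 ((hQ W _).2 fun a ha => hk a ?_))
    obtain ⟨b, hb, c, hc, rfl⟩ := Finset.mem_add.1 (support_mul _ _ ha)
    rw [support_X_pow, Finset.mem_singleton] at hb
    simp [hb]

theorem varPrime_mem_associatedPrimes {I : Ideal (MvPolynomial (Fin n) K)}
    {ψ : (Fin n →₀ ℕ) → Prop} (hI : ∀ f, f ∈ I ↔ ∀ a ∈ f.support, ψ a)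
    (W : Finset (Fin n)) (c : Fin n →₀ ℕ) (hc : ∀ a, ψ (a + c) ↔ ∃ i ∈ W, a i ≠ 0) :
    varPrime K W ∈ associatedPrimes (MvPolynomial (Fin n) K) (MvPolynomial (Fin n) K ⧸ I) := by
  classical
  refine mem_associatedPrimes_quotient.2 ⟨isPrime_varPrime W, monomial c 1, fun r => ?_⟩
  rw [mem_varPrime, hI]
  simp only [← hc]
  constructor
  · intro h a ha
    obtain ⟨b, hb, d, hd, rfl⟩ := Finset.mem_add.1 (support_mul _ _ ha)
    rw [Finset.mem_singleton.1 (support_monomial_subset hd)]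
    exact h b hb
  · intro h a ha
    apply h
    rw [mem_support_iff, coeff_mul_monomial, mul_one]
    exact mem_support_iff.1 ha

end Monomial

section ClosedWalk

variable {V : Type*} {H : SimpleGraph V}

theorem exists_periodic_of_adj (g : ℕ → V) (s d : ℕ)
    (h : ∀ i < d, H.Adj (g (s + i)) (g (s + i + 1))) (hc : H.Adj (g (s + d)) (g s)) :
    ∃ g' : ℕ → V, Function.Periodic g' (d + 1) ∧ ∀ i, H.Adj (g' i) (g' (i + 1)) := by
  refine ⟨fun i => g (s + i % (d + 1)), fun i => by simp, fun i => ?_⟩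
  have hlt : i % (d + 1) < d + 1 := Nat.mod_lt _ (Nat.succ_pos d)
  simp only
  rw [← Nat.mod_add_mod i (d + 1) 1]
  generalize i % (d + 1) = r at hlt
  rcases Nat.lt_succ_iff_lt_or_eq.1 hlt with hr | rfl
  · rw [Nat.mod_eq_of_lt (by omega), ← add_assoc]
    exact h r hr
  · simpa using hc

theorem exists_odd_periodic_of_not_colorable (hH : ¬ H.Colorable 2) :
    ∃ k, Odd k ∧ ∃ g : ℕ → V, Function.Periodic g k ∧ ∀ i, H.Adj (g i) (g (i + 1)) := by
  rw [SimpleGraph.two_colorable_iff_forall_loop_even] at hH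
  push Not at hH
  obtain ⟨u, w, hw⟩ := hH
  rw [Nat.not_even_iff_odd] at hw
  obtain ⟨m, hm⟩ := hw
  refine ⟨w.length, ⟨m, hm⟩, ?_⟩
  rw [hm]
  refine exists_periodic_of_adj w.getVert 0 (2 * m)
    (fun i hi => w.adj_getVert_succ (by omega)) ?_
  have := w.adj_getVert_succ (i := 2 * m) (by omega)
  rw [← hm, w.getVert_length] at this
  simpa using this

/-- A graph that is not bipartite contains an induced odd cycle. -/
theorem exists_induced_odd_cycle (hH : ¬ H.Colorable 2) :
    ∃ k, 3 ≤ k ∧ Odd k ∧ ∃ f : ZMod k → V, Function.Injective f ∧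
      (∀ i, H.Adj (f i) (f (i + 1))) ∧ ∀ i j, H.Adj (f i) (f j) → j = i + 1 ∨ i = j + 1 := by
  classical
  have hex := exists_odd_periodic_of_not_colorable hH
  obtain ⟨hodd, g, hper, hadj⟩ := Nat.find_spec hex
  have hmin : ∀ m, Odd m → (∃ g : ℕ → V, Function.Periodic g m ∧
      ∀ i, H.Adj (g i) (g (i + 1))) → Nat.find hex ≤ m :=
    fun m h₁ h₂ => Nat.find_min' hex ⟨h₁, h₂⟩
  generalize Nat.find hex = k at hodd hper hmin
  have hk1 : k ≠ 1 := by
    rintro rfl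
    have := hadj 0
    rw [hper 0] at this
    exact this.ne rfl
  have hk3 : 3 ≤ k := by
    obtain ⟨m, rfl⟩ := hodd
    omega
  have heven : ∀ s d, Even d → H.Adj (g (s + d)) (g s) → k ≤ d + 1 := fun s d hd h =>
    hmin _ hd.add_one (exists_periodic_of_adj g s d (fun i _ => hadj _) h)
  have hchord : ∀ s d, 0 < d → d < k → H.Adj (g (s + d)) (g s) → d = 1 ∨ d + 1 = k := by
    intro s d hd hdk h
    rcases Nat.even_or_odd d with hd' | hd'
    · have := heven s d hd' h
      omega
    · have := heven (s + d) (k - d) (Nat.Odd.sub_odd hodd hd') (by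
        rw [show s + d + (k - d) = s + k by omega, hper s]
        exact h.symm)
      omega
  have hinj : ∀ s d, 0 < d → d < k → g (s + d) ≠ g s := by
    intro s d hd hdk h
    have h₁ : H.Adj (g (s + (d - 1))) (g s) := by
      have := hadj (s + (d - 1))
      rwa [show s + (d - 1) + 1 = s + d by omega, h] at this
    have h₂ : H.Adj (g (s + (d + 1))) (g s) := by
      have := hadj (s + d)
      rw [h] at this
      exact this.symm
    have hd1 : d ≠ 1 := by
      rintro rfl
      exact h₁.ne rfl
    have hdk1 : d + 1 ≠ k := by
      intro hdk1
      rw [hdk1, hper s] at h₂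
      exact h₂.ne rfl
    have := hchord s (d - 1) (by omega) (by omega) h₁
    have := hchord s (d + 1) (by omega) (by omega) h₂
    obtain ⟨m, rfl⟩ := hodd
    omega
  have : NeZero k := ⟨by omega⟩
  have hlt : ∀ i j : ZMod k, i.val < j.val → H.Adj (g i.val) (g j.val) →
      j = i + 1 ∨ i = j + 1 := by
    intro i j hij h
    have hj := j.val_lt
    have := hchord i.val (j.val - i.val) (by omega) (by omega) (by
      rw [Nat.add_sub_cancel' hij.le]
      exact h.symm)
    rcases this with h1 | h1
    · left
      rw [← ZMod.natCast_zmod_val j, show j.val = i.val + 1 by omega]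
      simp
    · right
      rw [← ZMod.natCast_zmod_val i, ← ZMod.natCast_zmod_val j, ← Nat.cast_succ,
        show j.val.succ = i.val + k by omega]
      simp
  refine ⟨k, hk3, hodd, fun i => g i.val, ?_, ?_, ?_⟩
  · intro i j hij
    apply ZMod.val_injective
    by_contra hne
    have hi := i.val_lt
    have hj := j.val_lt
    rcases lt_or_gt_of_ne hne with hlt | hlt
    · refine hinj i.val (j.val - i.val) (by omega) (by omega) ?_
      rw [Nat.add_sub_cancel' hlt.le]
      exact hij.symm
    · refine hinj j.val (i.val - j.val) (by omega) (by omega) ?_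
      rw [Nat.add_sub_cancel' hlt.le]
      exact hij
  · intro i
    have : (i + 1).val = (i.val + 1) % k := by
      rw [← ZMod.val_natCast, Nat.cast_succ, ZMod.natCast_zmod_val]
    simp only [this, hper.map_mod_nat]
    exact hadj _
  · intro i j hij
    rcases lt_trichotomy i.val j.val with h | h | h
    · exact hlt i j h hij
    · simp only [h] at hij
      exact absurd rfl hij.ne
    · exact (hlt j i h hij.symm).symm

end ClosedWalk

section Covers

variable {n : ℕ} (G : GraphOn n)

/-- The exponent `a` dominates the sum of the indicators of two vertex covers. -/
def DominatesCovers (a : Fin n →₀ ℕ) : Prop :=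
  ∃ w₁ w₂ : Finset (Fin n), IsCover G w₁ ∧ IsCover G w₂ ∧
    ∀ i, (if i ∈ w₁ then 1 else 0) + (if i ∈ w₂ then 1 else 0) ≤ a i

theorem mem_coverIdeal_sq {K : Type*} [Field K] (f : MvPolynomial (Fin n) K) :
    f ∈ coverIdeal K G ^ 2 ↔ ∀ a ∈ f.support, DominatesCovers G a := by
  let ind : Finset (Fin n) → Fin n →₀ ℕ := fun w => ∑ i ∈ w, Finsupp.single i 1
  have hind : ∀ w i, ind w i = if i ∈ w then 1 else 0 := fun w i => by
    simp [ind, Finsupp.finsetSum_apply, Finsupp.single_apply]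
  have hmon : ∀ w, ∏ i ∈ w, X i = monomial (R := K) (ind w) 1 := fun w =>
    (monomial_sum_one _ _).symm
  have hspan : coverIdeal K G ^ 2 = Ideal.span ((fun s => monomial s (1 : K)) ''
      {s | ∃ w₁ w₂, IsCover G w₁ ∧ IsCover G w₂ ∧ s = ind w₁ + ind w₂}) := by
    rw [sq, coverIdeal, Ideal.span_mul_span']
    congr 1
    ext p
    simp only [Set.mem_mul, Set.mem_ofPred_eq, Set.mem_image]
    constructor
    · rintro ⟨_, ⟨w₁, h₁, rfl⟩, _, ⟨w₂, h₂, rfl⟩, rfl⟩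
      exact ⟨_, ⟨w₁, w₂, h₁, h₂, rfl⟩, by rw [hmon, hmon, monomial_mul, one_mul]⟩
    · rintro ⟨_, ⟨w₁, w₂, h₁, h₂, rfl⟩, rfl⟩
      exact ⟨_, ⟨w₁, h₁, rfl⟩, _, ⟨w₂, h₂, rfl⟩, by rw [hmon, hmon, monomial_mul, one_mul]⟩
  rw [hspan, mem_ideal_span_monomial_image]
  refine forall₂_congr fun a _ => ?_
  constructor
  · rintro ⟨_, ⟨w₁, w₂, h₁, h₂, rfl⟩, hle⟩
    exact ⟨w₁, w₂, h₁, h₂, fun i => by simpa [hind] using hle i⟩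
  · rintro ⟨w₁, w₂, h₁, h₂, hle⟩
    exact ⟨_, ⟨w₁, w₂, h₁, h₂, rfl⟩, fun i => by simpa [hind] using hle i⟩

variable {G}

theorem ne_of_mem_edges {u v : Fin n} (h : {u, v} ∈ G.edges) : u ≠ v := by
  rintro rfl
  simpa using G.card_eq _ h

theorem mem_or_mem_of_isCover {w : Finset (Fin n)} (hw : IsCover G w) {u v : Fin n}
    (h : {u, v} ∈ G.edges) : u ∈ w ∨ v ∈ w := by
  obtain ⟨x, hx⟩ := hw _ h
  simp only [Finset.mem_inter, Finset.mem_insert, Finset.mem_singleton] at hx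
  rcases hx with ⟨hx, rfl | rfl⟩
  exacts [Or.inl hx, Or.inr hx]

theorem isCover_of_mem_or_mem {w : Finset (Fin n)}
    (h : ∀ u v, {u, v} ∈ G.edges → u ∈ w ∨ v ∈ w) : IsCover G w := by
  intro e he
  obtain ⟨u, v, -, rfl⟩ := Finset.card_eq_two.1 (G.card_eq e he)
  rcases h u v he with hu | hv
  exacts [⟨u, by simp [hu]⟩, ⟨v, by simp [hv]⟩]

theorem DominatesCovers.two_le {a : Fin n →₀ ℕ} (ha : DominatesCovers G a) {u v : Fin n}
    (h : {u, v} ∈ G.edges) : 2 ≤ a u + a v := by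
  obtain ⟨w₁, w₂, h₁, h₂, hle⟩ := ha
  have hu := hle u
  have hv := hle v
  rcases mem_or_mem_of_isCover h₁ h with h1 | h1 <;> rcases mem_or_mem_of_isCover h₂ h with h2 | h2 <;>
    simp only [h1, h2, if_true] at hu hv <;> omega

theorem DominatesCovers.exists_two_le {a : Fin n →₀ ℕ} (ha : DominatesCovers G a)
    {W : Finset (Fin n)} (hW : IsInducedOddCycle G W) : ∃ i ∈ W, 2 ≤ a i := by
  obtain ⟨w₁, w₂, h₁, h₂, hle⟩ := ha
  obtain ⟨-, hodd, f, -, hfW, -, hedge, -⟩ := hW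
  by_contra! hlt
  have hexcl : ∀ i, ¬ (f i ∈ w₁ ∧ f i ∈ w₂) := fun i hi => by
    have h₁ := hle (f i)
    have h₂ := hlt _ (hfW i)
    simp only [hi.1, hi.2, if_true] at h₁
    omega
  have halt : ∀ i, f (i + 1) ∈ w₁ ↔ f i ∉ w₁ := fun i => by
    have := mem_or_mem_of_isCover h₁ (hedge i)
    have := mem_or_mem_of_isCover h₂ (hedge i)
    have := hexcl i
    have := hexcl (i + 1)
    tauto
  have hpar : ∀ m : ℕ, f (m : ZMod W.card) ∈ w₁ ↔ (Even m ↔ f 0 ∈ w₁) := by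
    intro m
    induction m with
    | zero => simp
    | succ m ih =>
      rw [Nat.cast_succ, halt, ih, Nat.even_add_one]
      tauto
  have := hpar W.card
  rw [ZMod.natCast_self, ← Nat.not_odd_iff_even] at this
  tauto

/-- The subgraph induced on the vertices of exponent one. -/
def levelOne (G : GraphOn n) (a : Fin n →₀ ℕ) : SimpleGraph (Fin n) where
  Adj u v := {u, v} ∈ G.edges ∧ a u = 1 ∧ a v = 1
  symm := ⟨fun u v h => ⟨Finset.pair_comm u v ▸ h.1, h.2.2, h.2.1⟩⟩
  loopless := ⟨fun _ h => ne_of_mem_edges h.1 rfl⟩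

theorem dominatesCovers_of_colorable {a : Fin n →₀ ℕ}
    (hedge : ∀ u v, {u, v} ∈ G.edges → 2 ≤ a u + a v) (hcol : (levelOne G a).Colorable 2) :
    DominatesCovers G a := by
  obtain ⟨c⟩ := hcol
  have hcover : ∀ t : Fin 2,
      IsCover G (Finset.univ.filter fun i => 2 ≤ a i ∨ (a i = 1 ∧ c i = t)) := by
    intro t
    refine isCover_of_mem_or_mem fun u v huv => ?_
    have h2 := hedge u v huv
    simp only [Finset.mem_filter, Finset.mem_univ, true_and]
    by_contra! hcon
    have hu : a u = 1 := by omega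
    have hv : a v = 1 := by omega
    have hne : c u ≠ c v := c.valid ⟨huv, hu, hv⟩
    have h1 := hcon.1.2 hu
    have h2 := hcon.2.2 hv
    omega
  refine ⟨_, _, hcover 0, hcover 1, fun i => ?_⟩
  simp only [Finset.mem_filter, Finset.mem_univ, true_and]
  by_cases h0 : c i = 0
  · simp only [h0]
    split_ifs <;> simp_all <;> omega
  · split_ifs <;> simp_all
    omega

theorem exists_isInducedOddCycle_s11 {a : Fin n →₀ ℕ} (hcol : ¬ (levelOne G a).Colorable 2) :
    ∃ W, IsInducedOddCycle G W ∧ ∀ i ∈ W, a i = 1 := by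
  obtain ⟨k, hk, hodd, f, hf, hadj, hind⟩ := exists_induced_odd_cycle hcol
  have : NeZero k := ⟨by omega⟩
  have hcard : (Finset.univ.image f).card = k := by
    rw [Finset.card_image_of_injective _ hf, Finset.card_univ, ZMod.card]
  have hone : ∀ i, a (f i) = 1 := fun i => (hadj i).2.1
  refine ⟨Finset.univ.image f, ?_, by simpa using hone⟩
  generalize hW : Finset.univ.image f = W at hcard
  subst hcard
  refine ⟨hk, hodd, f, hf, fun i => hW ▸ Finset.mem_image_of_mem f (Finset.mem_univ i),
    fun w hw => by simpa [← hW] using hw, fun i => (hadj i).1, fun e he heW => ?_⟩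
  obtain ⟨u, v, -, rfl⟩ := Finset.card_eq_two.1 (G.card_eq e he)
  obtain ⟨i, rfl⟩ : ∃ i, f i = u := by simpa [← hW] using heW (Finset.mem_insert_self u _)
  obtain ⟨j, rfl⟩ : ∃ j, f j = v := by simpa [← hW] using @heW v (by simp)
  rcases hind i j ⟨he, hone i, hone j⟩ with rfl | rfl
  · exact ⟨i, rfl⟩
  · exact ⟨j, Finset.pair_comm _ _⟩

theorem dominatesCovers_iff {a : Fin n →₀ ℕ} :
    DominatesCovers G a ↔ (∀ e ∈ G.edges, 2 ≤ ∑ i ∈ e, a i) ∧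
      ∀ W, IsInducedOddCycle G W → ∃ i ∈ W, 2 ≤ a i := by
  constructor
  · refine fun ha => ⟨fun e he => ?_, fun W hW => ha.exists_two_le hW⟩
    obtain ⟨u, v, huv, rfl⟩ := Finset.card_eq_two.1 (G.card_eq e he)
    rw [Finset.sum_pair huv]
    exact ha.two_le he
  · rintro ⟨hedge, hcycle⟩
    refine dominatesCovers_of_colorable (fun u v huv => ?_) ?_
    · simpa [Finset.sum_pair (ne_of_mem_edges huv)] using hedge _ huv
    · by_contra hcol
      obtain ⟨W, hW, hone⟩ := exists_isInducedOddCycle_s11 hcol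
      obtain ⟨i, hi, h2⟩ := hcycle W hW
      have := hone i hi
      omega

theorem isCover_compl_singleton (v : Fin n) : IsCover G {v}ᶜ := by
  refine isCover_of_mem_or_mem fun x y hxy => ?_
  have := ne_of_mem_edges hxy
  simp only [Finset.mem_compl, Finset.mem_singleton]
  by_contra! h
  exact this (h.1.trans h.2.symm)

theorem exists_socle_of_mem_edges {e : Finset (Fin n)} (he : e ∈ G.edges) :
    ∃ c : Fin n →₀ ℕ, ∀ a, DominatesCovers G (a + c) ↔ ∃ i ∈ e, a i ≠ 0 := by
  obtain ⟨u, v, huv, rfl⟩ := Finset.card_eq_two.1 (G.card_eq e he)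
  let c : Fin n →₀ ℕ :=
    Finsupp.equivFunOnFinite.symm fun x => if x = u then 1 else if x = v then 0 else 2
  have hcu : c u = 1 := by simp [c]
  have hcv : c v = 0 := by simp [c, huv.symm]
  have hc : ∀ x, x ≠ u → x ≠ v → c x = 2 := fun x h₁ h₂ => by simp [c, h₁, h₂]
  refine ⟨c, fun a => ⟨fun h => ?_, ?_⟩⟩
  · have h2 := h.two_le he
    by_contra! h0
    have hu := h0 u (by simp)
    have hv := h0 v (by simp)
    simp only [Finsupp.add_apply] at h2
    omega
  · rintro ⟨i, hi, hai⟩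
    simp only [Finset.mem_insert, Finset.mem_singleton] at hi
    rcases hi with rfl | rfl
    · refine ⟨{v}ᶜ, {v}ᶜ, isCover_compl_singleton v, isCover_compl_singleton v, fun x => ?_⟩
      simp only [Finset.mem_compl, Finset.mem_singleton, Finsupp.add_apply]
      have := hc x
      split_ifs <;> by_cases x = i <;> simp_all
      omega
    · refine ⟨{i}ᶜ, {u}ᶜ, isCover_compl_singleton i, isCover_compl_singleton u, fun x => ?_⟩
      simp only [Finset.mem_compl, Finset.mem_singleton, Finsupp.add_apply]
      have := hc x
      split_ifs <;> simp_all
      omega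

theorem exists_socle_of_isInducedOddCycle {W : Finset (Fin n)} (hW : IsInducedOddCycle G W) :
    ∃ c : Fin n →₀ ℕ, ∀ a, DominatesCovers G (a + c) ↔ ∃ i ∈ W, a i ≠ 0 := by
  classical
  let c : Fin n →₀ ℕ := Finsupp.equivFunOnFinite.symm fun x => if x ∈ W then 1 else 2
  have hc₁ : ∀ x ∈ W, c x = 1 := fun x hx => by simp [c, hx]
  have hc₂ : ∀ x ∉ W, c x = 2 := fun x hx => by simp [c, hx]
  refine ⟨c, fun a => ⟨fun h => ?_, ?_⟩⟩
  · obtain ⟨i, hi, h2⟩ := h.exists_two_le hW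
    refine ⟨i, hi, ?_⟩
    rw [Finsupp.add_apply, hc₁ i hi] at h2
    omega
  · rintro ⟨i, hi, hai⟩
    obtain ⟨hk, -, f, hf, hfW, hsurj, -, hind⟩ := hW
    have : NeZero W.card := ⟨by omega⟩
    obtain ⟨j₀, rfl⟩ := hsurj i hi
    have hcover : ∀ t : ℕ, IsCover G (Finset.univ.filter fun x =>
        x ∉ W ∨ ∃ j, f j = x ∧ (j = j₀ ∨ (j - j₀).val % 2 = t % 2)) := by
      intro t e he
      by_cases heW : e ⊆ W
      · obtain ⟨j, rfl⟩ := hind e he heW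
        by_cases hj : (j - j₀).val % 2 = t % 2
        · exact ⟨f j, by simpa using Or.inr ⟨j, rfl, Or.inr hj⟩⟩
        · refine ⟨f (j + 1), ?_⟩
          have hval : (j + 1 - j₀).val = ((j - j₀).val + 1) % W.card := by
            rw [← ZMod.val_natCast, Nat.cast_succ, ZMod.natCast_zmod_val]
            congr 1
            ring
          have hlt := (j - j₀).val_lt
          have : j + 1 = j₀ ∨ (j + 1 - j₀).val % 2 = t % 2 := by
            rcases Nat.lt_or_ge ((j - j₀).val + 1) W.card with h | h
            · right
              rw [hval, Nat.mod_eq_of_lt h]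
              omega
            · left
              rw [show (j - j₀).val + 1 = W.card by omega, Nat.mod_self,
                ZMod.val_eq_zero, sub_eq_zero] at hval
              exact hval
          simpa using Or.inr ⟨j + 1, rfl, this⟩
      · obtain ⟨x, hxe, hxW⟩ := Finset.not_subset.1 heW
        exact ⟨x, by simp [hxe, hxW]⟩
    refine ⟨_, _, hcover 0, hcover 1, fun x => ?_⟩
    simp only [Finset.mem_filter, Finset.mem_univ, true_and, Finsupp.add_apply]
    by_cases hx : x ∈ W
    · obtain ⟨j, rfl⟩ := hsurj x hx
      rw [hc₁ _ hx]
      simp only [hx, not_true_eq_false, false_or, hf.eq_iff, exists_eq_left]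
      by_cases hj : j = j₀
      · subst hj
        simp
        omega
      · simp only [hj, false_or]
        split_ifs <;> omega
    · rw [hc₂ x hx]
      split_ifs <;> omega

end Covers

end GraphOn

/-- Let `G` be a finite simple graph with cover ideal `J = J(G)`.
Then `Ass(S/J²) = {p_e : e ∈ E(G)} ∪ {p_W : G_W is an induced odd cycle}`. -/
theorem associatedPrimes_coverIdeal_sq {n : ℕ} (K : Type*) [Field K] (G : GraphOn n) :
    associatedPrimes (MvPolynomial (Fin n) K)
        (MvPolynomial (Fin n) K ⧸ (coverIdeal K G ^ 2)) =
      {P | ∃ e ∈ G.edges, P = varPrime K e} ∪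
      {P | ∃ W : Finset (Fin n), IsInducedOddCycle G W ∧ P = varPrime K W} := by
  classical
  ext P
  constructor
  · intro hP
    obtain ⟨W, hW, rfl⟩ := GraphOn.exists_eq_varPrime_of_mem_associatedPrimes
      (Finset.univ.filter fun W => W ∈ G.edges ∨ IsInducedOddCycle G W)
      (fun W a => (W ∈ G.edges → 2 ≤ ∑ i ∈ W, a i) ∧
        (IsInducedOddCycle G W → ∃ i ∈ W, 2 ≤ a i))
      (fun W _ a b hab h => ⟨fun hW => (h.1 hW).trans (Finset.sum_le_sum hab), fun hW => by
        obtain ⟨i, hi, h2⟩ := h.2 hW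
        exact ⟨i, hi, h2.trans (hab i hi)⟩⟩)
      (fun W _ i hi => ⟨2, fun a ha => ⟨fun _ =>
        ha.trans (Finset.single_le_sum (fun _ _ => Nat.zero_le _) hi), fun _ => ⟨i, hi, ha⟩⟩⟩)
      (fun f => by
        rw [GraphOn.mem_coverIdeal_sq]
        refine forall₂_congr fun a _ => ?_
        rw [GraphOn.dominatesCovers_iff]
        simp only [Finset.mem_filter, Finset.mem_univ, true_and]
        grind)
      hP
    simp only [Finset.mem_filter, Finset.mem_univ, true_and] at hW
    exact hW.imp (fun h => ⟨W, h, rfl⟩) (fun h => ⟨W, h, rfl⟩)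
  · rintro (⟨W, hW, rfl⟩ | ⟨W, hW, rfl⟩)
    · obtain ⟨c, hc⟩ := GraphOn.exists_socle_of_mem_edges hW
      exact GraphOn.varPrime_mem_associatedPrimes (GraphOn.mem_coverIdeal_sq G) W c hc
    · obtain ⟨c, hc⟩ := GraphOn.exists_socle_of_isInducedOddCycle hW
      exact GraphOn.varPrime_mem_associatedPrimes (GraphOn.mem_coverIdeal_sq G) W c hc
end
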